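/- (Convergence of the marginals of admissible initial data in the Boltzmann–Grad scaling.) Let β₀ > 0, μ₀ ∈ ℝ, γ > 0 and let f^in : ℝ³ × ℝ³ → ℝ be continuous with 0 ≤ f^in(x,v) ≤ e^{−μ₀ − β₀|v|²/2} and ∬_{ℝ³×ℝ³} f^in(x,v) dx dv = 1. For N ≥ 1 set r := (1/2)√(γ/N), Z_N := ∫_{Γ^r_N} ∏_{i=1}^N f^in(x_i,v_i) dX_N dV_N, and (when Z_N > 0) F^in_N := Z_N^{-1} 1_{Ω^r_N}(X_N) ∏_{i=1}^N f^in(x_i,v_i), with marginals F^in_{N:k}(X_k,V_k) := ∫_{(ℝ³)^{N−k}×(ℝ³)^{N−k}} F^in_N(X_N,V_N) dx_{k+1}…dx_N dv_{k+1}…dv_N. Then for every fixed k ≥ 1, F^in_{N:k} converges to (X_k,V_k) ↦ ∏_{i=1}^k f^in(x_i,v_i) as N → ∞, uniformly on every compact subset of Ω^0_k × (ℝ³)^k, where Ω^0_k := {(x_1,…,x_k) ∈ (ℝ³)^k : x_i ≠ x_j for all i ≠ j}. -/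

import Mathlib

open MeasureTheory Real
open scoped ENNReal

noncomputable section

abbrev R3 : Type := EuclideanSpace ℝ (Fin 3)

/-- The weighted norm `|g|_{k,β} := ess sup |g(X_k,V_k)| exp(β|V_k|²/2)`, valued in `ℝ≥0∞`. -/
noncomputable def wnorm (k : ℕ) (β : ℝ) (g : (Fin k → R3) → (Fin k → R3) → ℝ) : ℝ≥0∞ :=
  essSup (fun Z : (Fin k → R3) × (Fin k → R3) =>
    ENNReal.ofReal (|g Z.1 Z.2| * exp (β * (∑ j, ‖Z.2 j‖ ^ 2) / 2))) volume

/-- The norm `‖(g_n)_{n≥1}‖_{μ,β} := sup_{n ≥ 1} |g_n|_{n,β} e^{μn}`, valued in `ℝ≥0∞`. -/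
noncomputable def seqnorm (μ β : ℝ)
    (g : (n : ℕ) → (Fin n → R3) → (Fin n → R3) → ℝ) : ℝ≥0∞ :=
  ⨆ n : ℕ, wnorm (n + 1) β (g (n + 1)) * ENNReal.ofReal (exp (μ * (n + 1)))

/-- The set `Ω^r_m` of admissible positions of `m` hard spheres of radius `r`. -/
def OmegaSet (m : ℕ) (r : ℝ) : Set (Fin m → R3) :=
  {X | ∀ i j : Fin m, i ≠ j → 2 * r < dist (X i) (X j)}

/-- The Boltzmann–Grad radius `r = (1/2)√(γ/N)`. -/
noncomputable def rBG (γ : ℝ) (N : ℕ) : ℝ := (1 / 2) * Real.sqrt (γ / N)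

/-- The normalization constant `Z_N = ∫_{Γ^r_N} ∏ f^in(x_i,v_i) dX_N dV_N`. -/
noncomputable def ZN (f : R3 → R3 → ℝ) (N : ℕ) (r : ℝ) : ℝ :=
  ∫ Z : (Fin N → R3) × (Fin N → R3),
    (OmegaSet N r).indicator (fun _ => (1 : ℝ)) Z.1 * ∏ i, f (Z.1 i) (Z.2 i)

/-- The admissible `N`-particle initial distribution
`F^in_N = Z_N⁻¹ 1_{Ω^r_N} ∏ f^in(x_i,v_i)`. -/
noncomputable def FinitN (f : R3 → R3 → ℝ) (N : ℕ) (r : ℝ) (X V : Fin N → R3) : ℝ :=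
  (ZN f N r)⁻¹ * (OmegaSet N r).indicator (fun _ => (1 : ℝ)) X * ∏ i, f (X i) (V i)

/-- Completion of a `k`-tuple by an `(N-k)`-tuple into an `N`-tuple. -/
def combine {N k : ℕ} (hk : k ≤ N) (X : Fin k → R3) (W : Fin (N - k) → R3) : Fin N → R3 :=
  fun i => if h : (i : ℕ) < k then X ⟨i, h⟩ else W ⟨(i : ℕ) - k, by have := i.isLt; omega⟩

/-- The `k`-th marginal of an `N`-particle distribution. -/
noncomputable def marginal (N k : ℕ) (hk : k ≤ N) (F : (Fin N → R3) → (Fin N → R3) → ℝ)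
    (X V : Fin k → R3) : ℝ :=
  ∫ W : (Fin (N - k) → R3) × (Fin (N - k) → R3), F (combine hk X W.1) (combine hk V W.2)

/-- The family of all marginals of an `N`-particle distribution (`0` for `k > N`). -/
noncomputable def margFam (N : ℕ) (F : (Fin N → R3) → (Fin N → R3) → ℝ) :
    (k : ℕ) → (Fin k → R3) → (Fin k → R3) → ℝ :=
  fun k => if hk : k ≤ N then marginal N k hk F else fun _ _ => 0

/-!
The velocities integrate out: for admissible positions `X_k` the marginal is `∏ f^in(x_i, v_i)`
times the ratio of the probability that `N - k` independent particles, distributed according to the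
spatial density of `f^in`, overlap neither each other nor `X_k`, to the probability that `N`
independent particles do not overlap. The spatial density is bounded, so a particle lies within `2r`
of a given point with probability `δ_N = O(r³)`, and inserting or removing one particle or one
obstacle changes these probabilities by a relative amount `O(N δ_N)`. In the Boltzmann–Grad scaling
`N δ_N = O(N r³) = O(r)`, so the ratio tends to `1`, at a rate that does not depend on `X_k`.
-/

open Set Filter Topology
open scoped NNReal

section ProductMeasures

theorem measure_prod_le_mul_of_forall_section_le {α β : Type*} [MeasurableSpace α]
    [MeasurableSpace β] {μ : Measure α} {ν : Measure β} [SFinite μ] [SFinite ν] {δ : ℝ≥0∞}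
    {S : Set (α × β)} (hS : MeasurableSet S) {B : Set β} (hB : MeasurableSet B)
    (hSB : ∀ p ∈ S, p.2 ∈ B) (hδ : ∀ y, μ ((·, y) ⁻¹' S) ≤ δ) :
    μ.prod ν S ≤ δ * ν B := by
  rw [Measure.prod_apply_symm hS, ← lintegral_indicator_const hB]
  refine lintegral_mono fun y => ?_
  by_cases hy : y ∈ B
  · simpa [hy] using hδ y
  · have : (·, y) ⁻¹' S = ∅ := eq_empty_of_forall_notMem fun x hx => hy (hSB _ hx)
    simp [this]

theorem measurePreserving_removeNth {E : Type*} [MeasurableSpace E] (ν : Measure E)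
    [IsProbabilityMeasure ν] {n : ℕ} (j : Fin (n + 1)) :
    MeasurePreserving (fun W : Fin (n + 1) → E => j.removeNth W)
      (Measure.pi fun _ => ν) (Measure.pi fun _ => ν) :=
  measurePreserving_snd.comp (measurePreserving_piFinSuccAbove (fun _ => ν) j)

theorem pi_withDensity_ofReal {ι : Type*} [Fintype ι] {α : ι → Type*}
    [∀ i, MeasurableSpace (α i)] {μ : ∀ i, Measure (α i)} [∀ i, SigmaFinite (μ i)]
    {g : ∀ i, α i → ℝ} (hg : ∀ i, Integrable (g i) (μ i)) (hg0 : ∀ i x, 0 ≤ g i x) :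
    Measure.pi (fun i => (μ i).withDensity fun x => ENNReal.ofReal (g i x)) =
      (Measure.pi μ).withDensity fun x => ENNReal.ofReal (∏ i, g i (x i)) := by
  have (i : ι) : IsFiniteMeasure ((μ i).withDensity fun x => ENNReal.ofReal (g i x)) :=
    isFiniteMeasure_withDensity_ofReal (hg i).2
  refine Measure.pi_eq fun s hs => ?_
  have hgs (i : ι) : Integrable (g i) ((μ i).restrict (s i)) := (hg i).restrict
  calc ((Measure.pi μ).withDensity fun x => ENNReal.ofReal (∏ i, g i (x i))) (univ.pi s)
      = ∫⁻ x, ENNReal.ofReal (∏ i, g i (x i)) ∂Measure.pi fun i => (μ i).restrict (s i) := by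
        rw [withDensity_apply _ (.univ_pi hs), Measure.restrict_pi_pi]
    _ = ENNReal.ofReal (∏ i, ∫ x in s i, g i x ∂μ i) := by
        rw [← integral_fintype_prod_eq_prod, ofReal_integral_eq_lintegral_ofReal
          (.fintype_prod_dep hgs) (.of_forall fun x => Finset.prod_nonneg fun i _ => hg0 i _)]
    _ = ∏ i, ENNReal.ofReal (∫ x in s i, g i x ∂μ i) :=
        ENNReal.ofReal_prod_of_nonneg fun i _ => integral_nonneg (hg0 i)
    _ = ∏ i, ((μ i).withDensity fun x => ENNReal.ofReal (g i x)) (s i) := by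
        refine Finset.prod_congr rfl fun i _ => ?_
        rw [withDensity_apply _ (hs i),
          ofReal_integral_eq_lintegral_ofReal (hgs i) (.of_forall (hg0 i))]

end ProductMeasures

section Nonoverlap

variable {ι κ E : Type*} [PseudoMetricSpace E]

/-- The hard-sphere configurations of points of `E`, indexed by `ι`, with exclusion distance `s`.
For `E = ℝ³`, `ι = Fin m` and `s = 2r` this is `Ω^r_m`. -/
def nonoverlapSet (ι E : Type*) [PseudoMetricSpace E] (s : ℝ) : Set (ι → E) :=
  {W | Pairwise fun i j => s < dist (W i) (W j)}

/-- The hard-sphere configurations that moreover keep the exclusion distance `s` to the fixed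
obstacles `X`. -/
def nonoverlapAvoidingSet (ι : Type*) (X : κ → E) (s : ℝ) : Set (ι → E) :=
  {W | W ∈ nonoverlapSet ι E s ∧ ∀ i j, s < dist (X i) (W j)}

theorem removeNth_mem_nonoverlapSet {n : ℕ} {s : ℝ} {W : Fin (n + 1) → E}
    (hW : W ∈ nonoverlapSet (Fin (n + 1)) E s) (j : Fin (n + 1)) :
    j.removeNth W ∈ nonoverlapSet (Fin n) E s :=
  fun _ _ hab => hW (Fin.succAbove_right_injective.ne hab)

theorem mem_nonoverlapSet_fin_succ {n : ℕ} {s : ℝ} {W : Fin (n + 1) → E} :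
    W ∈ nonoverlapSet (Fin (n + 1)) E s ↔
      Fin.tail W ∈ nonoverlapSet (Fin n) E s ∧ ∀ i, s < dist (W 0) (Fin.tail W i) := by
  have : Std.Symm fun i j => s < dist (W i) (W j) := ⟨fun i j h => by rwa [dist_comm]⟩
  exact pairwise_fin_succ_iff_of_isSymm.trans and_comm

theorem isOpen_setOf_mem_nonoverlapSet [Finite ι] :
    IsOpen {p : ℝ × (ι → E) | p.2 ∈ nonoverlapSet ι E p.1} := by
  change IsOpen {p : ℝ × (ι → E) | ∀ i j, i ≠ j → p.1 < dist (p.2 i) (p.2 j)}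
  simp only [ofPred_forall]
  exact isOpen_iInter_of_finite fun i => isOpen_iInter_of_finite fun j =>
    isOpen_iInter_of_finite fun _ => isOpen_lt (by fun_prop) (by fun_prop)

theorem eventually_subset_nonoverlapSet {E : Type*} [MetricSpace E] [Finite ι]
    {K : Set (ι → E)} (hK : IsCompact K) (hinj : ∀ X ∈ K, Function.Injective X) :
    ∀ᶠ s in 𝓝 (0 : ℝ), K ⊆ nonoverlapSet ι E s :=
  hK.eventually_forall_of_forall_eventually fun X hX =>
    isOpen_setOf_mem_nonoverlapSet.eventually_mem (x := (0, X))
      fun _ _ hij => dist_pos.2 ((hinj X hX).ne hij)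

variable [MeasurableSpace E]

/-- The probability that `n` independent particles of law `ν` are at pairwise distance larger
than `s`; the normalization constant `Z_N` of the hard-sphere gas is of this form. -/
def nonoverlapProb (ν : Measure E) (n : ℕ) (s : ℝ) : ℝ :=
  (Measure.pi fun _ : Fin n => ν).real (nonoverlapSet (Fin n) E s)

variable {ν : Measure E} {s ε : ℝ} {δ : ℝ≥0}

theorem nonoverlapProb_nonneg (n : ℕ) : 0 ≤ nonoverlapProb ν n s :=
  measureReal_nonneg

theorem nonoverlapProb_zero : nonoverlapProb ν 0 s = 1 := by
  simp [nonoverlapProb, nonoverlapSet, Subsingleton.pairwise, measureReal_def,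
    Measure.pi_of_empty fun _ : Fin 0 => ν]

theorem measureReal_nonoverlapAvoidingSet_le [IsFiniteMeasure ν] (n : ℕ) (X : κ → E) :
    (Measure.pi fun _ => ν).real (nonoverlapAvoidingSet (Fin n) X s) ≤ nonoverlapProb ν n s :=
  measureReal_mono fun _ hW => hW.1

variable [OpensMeasurableSpace E] [SecondCountableTopology E]

theorem measurableSet_nonoverlapSet [Countable ι] (s : ℝ) :
    MeasurableSet (nonoverlapSet ι E s) := by
  simp only [nonoverlapSet, Pairwise, ofPred_forall]
  exact .iInter fun i => .iInter fun j => .iInter fun _ =>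
    measurableSet_lt measurable_const (by fun_prop)

theorem measurableSet_nonoverlapAvoidingSet [Countable ι] [Countable κ] (X : κ → E) (s : ℝ) :
    MeasurableSet (nonoverlapAvoidingSet ι X s) := by
  simp only [nonoverlapAvoidingSet, ofPred_and, ofPred_forall]
  exact (measurableSet_nonoverlapSet s).inter <| .iInter fun i => .iInter fun j =>
    measurableSet_lt measurable_const (by fun_prop)

section FiniteMeasure

variable [IsFiniteMeasure ν]

theorem measureReal_removeNth_mem_and_dist_le (hδ : ∀ x, ν (Metric.closedBall x s) ≤ δ) {n : ℕ}
    (j : Fin (n + 1)) {B : Set (Fin n → E)} (hB : MeasurableSet B) {g : (Fin n → E) → E}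
    (hg : Measurable g) :
    (Measure.pi fun _ => ν).real
        {W : Fin (n + 1) → E | j.removeNth W ∈ B ∧ dist (W j) (g (j.removeNth W)) ≤ s} ≤
      δ * (Measure.pi fun _ => ν).real B := by
  set S : Set (E × (Fin n → E)) := {p | p.2 ∈ B ∧ dist p.1 (g p.2) ≤ s}
  have hS : MeasurableSet S := (measurable_snd hB).inter <|
    measurableSet_le (measurable_fst.dist (hg.comp measurable_snd)) measurable_const
  have hle : ν.prod (Measure.pi fun _ => ν) S ≤ δ * Measure.pi (fun _ => ν) B :=
    measure_prod_le_mul_of_forall_section_le hS hB (fun _ hp => hp.1) fun y =>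
      (measure_mono fun _ hx => hx.2).trans (hδ (g y))
  have hpre := (measurePreserving_piFinSuccAbove (fun _ => ν) j).measure_preimage
    hS.nullMeasurableSet
  calc _ = (ν.prod (Measure.pi fun _ => ν) S).toReal := congrArg ENNReal.toReal hpre
    _ ≤ (δ * Measure.pi (fun _ => ν) B).toReal := ENNReal.toReal_mono (by finiteness) hle
    _ = _ := by simp [measureReal_def]

theorem measureReal_le_add_card_mul_of_subset (hδ : ∀ x, ν (Metric.closedBall x s) ≤ δ) {n : ℕ}
    [Fintype κ] (j : κ → Fin (n + 1)) {B : Set (Fin n → E)} (hB : MeasurableSet B)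
    {g : κ → (Fin n → E) → E} (hg : ∀ c, Measurable (g c)) {S T : Set (Fin (n + 1) → E)}
    (hST : ∀ W ∈ S, W ∉ T → ∃ c, (j c).removeNth W ∈ B ∧
      dist (W (j c)) (g c ((j c).removeNth W)) ≤ s) :
    (Measure.pi fun _ => ν).real S ≤
      (Measure.pi fun _ => ν).real T +
        Fintype.card κ * (δ * (Measure.pi fun _ => ν).real B) := by
  set D : κ → Set (Fin (n + 1) → E) := fun c =>
    {W | (j c).removeNth W ∈ B ∧ dist (W (j c)) (g c ((j c).removeNth W)) ≤ s}
  have hsub : S ⊆ T ∪ ⋃ c, D c := fun W hW => or_iff_not_imp_left.2 fun hT =>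
    mem_iUnion.2 (hST W hW hT)
  calc (Measure.pi fun _ => ν).real S
      ≤ (Measure.pi fun _ => ν).real T + ∑ c, (Measure.pi fun _ => ν).real (D c) :=
        (measureReal_mono hsub).trans <| (measureReal_union_le _ _).trans <| by
          gcongr; exact measureReal_iUnion_fintype_le _
    _ ≤ (Measure.pi fun _ => ν).real T +
          ∑ _c : κ, δ * (Measure.pi fun _ => ν).real B := by
        gcongr with c
        exact measureReal_removeNth_mem_and_dist_le hδ (j c) hB (hg c)
    _ = _ := by simp

/-- Removing the particle that is too close to an obstacle leaves an admissible configuration of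
`n - 1` particles; this is what makes the error proportional to `nonoverlapProb ν (n - 1) s`. -/
theorem nonoverlapProb_le_measureReal_avoiding_add (hδ : ∀ x, ν (Metric.closedBall x s) ≤ δ)
    [Fintype κ] (n : ℕ) (X : κ → E) :
    nonoverlapProb ν n s ≤
      (Measure.pi fun _ => ν).real (nonoverlapAvoidingSet (Fin n) X s) +
        Fintype.card κ * (n * δ) * nonoverlapProb ν (n - 1) s := by
  rcases n with _ | n
  · simp [nonoverlapProb, nonoverlapAvoidingSet]
  have h := measureReal_le_add_card_mul_of_subset hδ (κ := κ × Fin (n + 1)) Prod.snd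
    (measurableSet_nonoverlapSet s) (g := fun c _ => X c.1) (fun _ => measurable_const)
    (S := nonoverlapSet (Fin (n + 1)) E s) (T := nonoverlapAvoidingSet (Fin (n + 1)) X s)
    fun W hW hnot => by
      obtain ⟨i, j, hij⟩ : ∃ i j, dist (X i) (W j) ≤ s := by
        simpa [nonoverlapAvoidingSet, hW] using hnot
      exact ⟨(i, j), removeNth_mem_nonoverlapSet hW j, by rwa [dist_comm]⟩
  rw [Fintype.card_prod, Fintype.card_fin, Nat.cast_mul] at h
  rw [Nat.add_sub_cancel]
  simp only [nonoverlapProb]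
  linarith

end FiniteMeasure

variable [IsProbabilityMeasure ν]

theorem antitone_nonoverlapProb : Antitone fun n => nonoverlapProb ν n s := by
  refine antitone_nat_of_succ_le fun n => ?_
  rw [nonoverlapProb, nonoverlapProb, ← (measurePreserving_removeNth ν (0 : Fin (n + 1))
    ).measureReal_preimage (measurableSet_nonoverlapSet s).nullMeasurableSet]
  exact measureReal_mono fun W hW => removeNth_mem_nonoverlapSet hW 0

theorem one_sub_mul_nonoverlapProb_le_succ (hδ : ∀ x, ν (Metric.closedBall x s) ≤ δ) (n : ℕ) :
    (1 - n * δ) * nonoverlapProb ν n s ≤ nonoverlapProb ν (n + 1) s := by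
  have hmeas := measurableSet_nonoverlapSet (ι := Fin n) (E := E) s
  have h := measureReal_le_add_card_mul_of_subset hδ (κ := Fin n) (fun _ => 0) hmeas
    (g := fun i W => W i) measurable_pi_apply
    (S := Fin.removeNth 0 ⁻¹' nonoverlapSet (Fin n) E s)
    (T := nonoverlapSet (Fin (n + 1)) E s) fun W hW hnot => by
      rw [mem_preimage, Fin.removeNth_zero] at hW
      rw [mem_nonoverlapSet_fin_succ, not_and] at hnot
      simpa [hW] using hnot hW
  rw [(measurePreserving_removeNth ν 0).measureReal_preimage hmeas.nullMeasurableSet,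
    Fintype.card_fin] at h
  simp only [nonoverlapProb]
  linarith

theorem one_sub_mul_nonoverlapProb_pred_le (hδ : ∀ x, ν (Metric.closedBall x s) ≤ δ) (n : ℕ) :
    (1 - n * δ) * nonoverlapProb ν (n - 1) s ≤ nonoverlapProb ν n s := by
  rcases n with _ | n
  · simp
  · have h : (1 - (n + 1 : ℕ) * (δ : ℝ)) ≤ 1 - n * δ := by gcongr; simp
    exact (mul_le_mul_of_nonneg_right h (nonoverlapProb_nonneg n)).trans
      (one_sub_mul_nonoverlapProb_le_succ hδ n)

theorem one_sub_pow_mul_nonoverlapProb_le_add (hδ : ∀ x, ν (Metric.closedBall x s) ≤ δ) (n : ℕ)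
    {k : ℕ} (hε : (n + k : ℕ) * δ ≤ ε) (hε1 : ε ≤ 1) :
    (1 - ε) ^ k * nonoverlapProb ν n s ≤ nonoverlapProb ν (n + k) s := by
  induction k with
  | zero => simp
  | succ k ih =>
    have hle : ((n + k : ℕ) : ℝ) * δ ≤ ε := le_trans (by gcongr; simp) hε
    calc (1 - ε) ^ (k + 1) * nonoverlapProb ν n s
        = (1 - ε) * ((1 - ε) ^ k * nonoverlapProb ν n s) := by ring
      _ ≤ (1 - ε) * nonoverlapProb ν (n + k) s :=
        mul_le_mul_of_nonneg_left (ih hle) (by linarith)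
      _ ≤ (1 - (n + k : ℕ) * δ) * nonoverlapProb ν (n + k) s :=
        mul_le_mul_of_nonneg_right (by linarith) (nonoverlapProb_nonneg _)
      _ ≤ nonoverlapProb ν (n + (k + 1)) s := one_sub_mul_nonoverlapProb_le_succ hδ _

theorem nonoverlapProb_pos (hδ : ∀ x, ν (Metric.closedBall x s) ≤ δ) {n : ℕ}
    (hn : n * (δ : ℝ) < 1) : 0 < nonoverlapProb ν n s := by
  have h := one_sub_pow_mul_nonoverlapProb_le_add hδ 0 (k := n) (by simp) hn.le
  rw [nonoverlapProb_zero, zero_add, mul_one] at h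
  exact (pow_pos (by linarith) n).trans_le h

theorem abs_measureReal_avoiding_sub_le (hδ : ∀ x, ν (Metric.closedBall x s) ≤ δ) {n k : ℕ}
    (hε : (n + k : ℕ) * δ ≤ ε) (hε1 : ε ≤ 1) (X : Fin k → E) :
    |(Measure.pi fun _ => ν).real (nonoverlapAvoidingSet (Fin n) X s) -
        nonoverlapProb ν (n + k) s| ≤
      k * ε * nonoverlapProb ν (n - 1) s := by
  have hP := nonoverlapProb_nonneg (ν := ν) (s := s) (n - 1)
  have hanti := antitone_nonoverlapProb (ν := ν) (s := s)
  have hn : n * (δ : ℝ) ≤ ε := le_trans (by gcongr; simp) hε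
  have hε0 : 0 ≤ ε := le_trans (by positivity) hn
  have hbernoulli : 1 - k * ε ≤ (1 - ε) ^ k := by
    simpa [sub_eq_add_neg] using one_add_mul_le_pow (a := -ε) (by linarith) k
  rw [abs_sub_le_iff]
  constructor
  · have hadd : (1 - k * ε) * nonoverlapProb ν n s ≤ nonoverlapProb ν (n + k) s :=
      (mul_le_mul_of_nonneg_right hbernoulli (nonoverlapProb_nonneg n)).trans
        (one_sub_pow_mul_nonoverlapProb_le_add hδ n hε hε1)
    have hpred : k * ε * nonoverlapProb ν n s ≤ k * ε * nonoverlapProb ν (n - 1) s :=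
      mul_le_mul_of_nonneg_left (hanti (Nat.sub_le n 1)) (by positivity)
    linarith [measureReal_nonoverlapAvoidingSet_le (ν := ν) (s := s) n X]
  · have hle : k * (n * δ) * nonoverlapProb ν (n - 1) s ≤
        k * ε * nonoverlapProb ν (n - 1) s := by gcongr
    have havoid := nonoverlapProb_le_measureReal_avoiding_add hδ n X
    rw [Fintype.card_fin] at havoid
    linarith [hanti (Nat.le_add_right n k)]

theorem abs_measureReal_avoiding_div_sub_one_le (hδ : ∀ x, ν (Metric.closedBall x s) ≤ δ)
    {n k : ℕ} (hε : (n + k : ℕ) * δ ≤ ε) (hε1 : ε < 1) (X : Fin k → E) :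
    |(Measure.pi fun _ => ν).real (nonoverlapAvoidingSet (Fin n) X s) /
        nonoverlapProb ν (n + k) s - 1| ≤
      k * ε / (1 - ε) ^ (k + 1) := by
  have hpos : 0 < nonoverlapProb ν (n + k) s := nonoverlapProb_pos hδ (hε.trans_lt hε1)
  have hn : n * (δ : ℝ) ≤ ε := le_trans (by gcongr; simp) hε
  have hε0 : 0 ≤ ε := le_trans (by positivity) hn
  have h1ε : 0 < 1 - ε := by linarith
  have hpred : (1 - ε) ^ (k + 1) * nonoverlapProb ν (n - 1) s ≤ nonoverlapProb ν (n + k) s :=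
    calc (1 - ε) ^ (k + 1) * nonoverlapProb ν (n - 1) s
        = (1 - ε) ^ k * ((1 - ε) * nonoverlapProb ν (n - 1) s) := by ring
      _ ≤ (1 - ε) ^ k * ((1 - n * δ) * nonoverlapProb ν (n - 1) s) := by
        gcongr; exact nonoverlapProb_nonneg _
      _ ≤ (1 - ε) ^ k * nonoverlapProb ν n s := by
        gcongr; exact one_sub_mul_nonoverlapProb_pred_le hδ n
      _ ≤ nonoverlapProb ν (n + k) s := one_sub_pow_mul_nonoverlapProb_le_add hδ n hε hε1.le
  rw [div_sub_one hpos.ne', abs_div, abs_of_pos hpos, div_le_div_iff₀ hpos (pow_pos h1ε _)]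
  calc _ ≤ k * ε * nonoverlapProb ν (n - 1) s * (1 - ε) ^ (k + 1) := by
        gcongr; exact abs_measureReal_avoiding_sub_le hδ hε hε1.le X
    _ = k * ε * ((1 - ε) ^ (k + 1) * nonoverlapProb ν (n - 1) s) := by ring
    _ ≤ k * ε * nonoverlapProb ν (n + k) s := by gcongr

end Nonoverlap

section PositionLaw

variable {ι E V : Type*} [MeasureSpace E] [MeasureSpace V] {f : E → V → ℝ}

/-- The law of the position of a particle whose phase space density is `f`. -/
def positionLaw (f : E → V → ℝ) : Measure E :=
  (volume.withDensity fun z : E × V => ENNReal.ofReal (f z.1 z.2)).fst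

theorem isProbabilityMeasure_positionLaw (hf0 : ∀ x v, 0 ≤ f x v)
    (hf1 : ∫ z : E × V, f z.1 z.2 = 1) : IsProbabilityMeasure (positionLaw f) := by
  have : IsProbabilityMeasure (volume.withDensity fun z : E × V => ENNReal.ofReal (f z.1 z.2)) := by
    constructor
    rw [withDensity_apply _ .univ, setLIntegral_univ, ← ofReal_integral_eq_lintegral_ofReal
      (integrable_of_integral_eq_one hf1) (.of_forall fun _ => hf0 _ _), hf1, ENNReal.ofReal_one]
  exact inferInstanceAs (IsProbabilityMeasure (Measure.fst _))

variable [SigmaFinite (volume : Measure V)]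

theorem positionLaw_le_mul_volume [SigmaFinite (volume : Measure E)]
    (hf : Measurable (Function.uncurry f)) {ρ : ℝ≥0∞} (hρ : ∀ x, ∫⁻ v, ENNReal.ofReal (f x v) ≤ ρ)
    {A : Set E} (hA : MeasurableSet A) : positionLaw f A ≤ ρ * volume A := by
  rw [positionLaw, Measure.fst_apply hA, withDensity_apply _ (measurable_fst hA), ← prod_univ,
    Measure.volume_eq_prod, setLIntegral_prod (fun z : E × V => ENNReal.ofReal (f z.1 z.2))
      hf.ennreal_ofReal.aemeasurable]
  simpa using lintegral_mono (μ := volume.restrict A) hρ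

theorem integral_indicator_mul_prod [Fintype ι] [SigmaFinite (volume : Measure E)]
    (hf0 : ∀ x v, 0 ≤ f x v) (hfi : Integrable fun z : E × V => f z.1 z.2)
    {A : Set (ι → E)} (hA : MeasurableSet A) :
    ∫ Z : (ι → E) × (ι → V), A.indicator (fun _ => (1 : ℝ)) Z.1 * ∏ i, f (Z.1 i) (Z.2 i) =
      (Measure.pi fun _ => positionLaw f).real A := by
  have : IsFiniteMeasure (volume.withDensity fun z : E × V => ENNReal.ofReal (f z.1 z.2)) :=
    isFiniteMeasure_withDensity_ofReal hfi.2
  have hpos : Measurable fun (W : ι → E × V) i => (W i).1 := by fun_prop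
  have hint : Integrable fun W : ι → E × V => ∏ i, f (W i).1 (W i).2 :=
    .fintype_prod fun _ => hfi
  have hprod0 (W : ι → E × V) : 0 ≤ ∏ i, f (W i).1 (W i).2 :=
    Finset.prod_nonneg fun _ _ => hf0 _ _
  calc _ = ∫ W : ι → E × V,
        A.indicator (fun _ => (1 : ℝ)) (fun i => (W i).1) * ∏ i, f (W i).1 (W i).2 :=
        ((volume_measurePreserving_arrowProdEquivProdArrow E V ι).integral_comp' _).symm
    _ = ∫ W in (fun (W : ι → E × V) i => (W i).1) ⁻¹' A, ∏ i, f (W i).1 (W i).2 := by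
        rw [← integral_indicator (hpos hA)]
        congr with W
        by_cases hW : (fun i => (W i).1) ∈ A <;> simp [indicator, hW]
    _ = ((volume.withDensity fun W : ι → E × V => ENNReal.ofReal (∏ i, f (W i).1 (W i).2)).map
          fun W i => (W i).1).real A := by
        rw [map_measureReal_apply hpos hA, measureReal_def, withDensity_apply _ (hpos hA),
          integral_eq_lintegral_of_nonneg_ae (.of_forall hprod0)
            hint.1.restrict]
    _ = _ := by
        rw [volume_pi, ← pi_withDensity_ofReal (fun _ => hfi) fun _ _ => hf0 _ _,
          Measure.pi_map_pi fun _ => measurable_fst.aemeasurable]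
        rfl

end PositionLaw

section Marginals

theorem prod_combine {M : Type*} [CommMonoid M] {N k : ℕ} (hk : k ≤ N) (f : R3 → R3 → M)
    (X V : Fin k → R3) (Y W : Fin (N - k) → R3) :
    ∏ i, f (combine hk X Y i) (combine hk V W i) =
      (∏ i, f (X i) (V i)) * ∏ i, f (Y i) (W i) := by
  rw [← (finCongr (Nat.add_sub_of_le hk)).prod_comp, Fin.prod_univ_add]
  simp [combine]

theorem combine_mem_nonoverlapSet_iff {N k : ℕ} (hk : k ≤ N) {s : ℝ} {X : Fin k → R3}
    (hX : X ∈ nonoverlapSet (Fin k) R3 s) {Y : Fin (N - k) → R3} :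
    combine hk X Y ∈ nonoverlapSet (Fin N) R3 s ↔ Y ∈ nonoverlapAvoidingSet (Fin (N - k)) X s := by
  have hl (i : Fin k) : combine hk X Y ⟨i, by omega⟩ = X i := by simp [combine]
  have hr (j : Fin (N - k)) : combine hk X Y ⟨k + j, by omega⟩ = Y j := by simp [combine]
  constructor
  · refine fun h => ⟨fun a b hab => ?_, fun i j => ?_⟩
    · change s < dist (Y a) (Y b)
      rw [← hr a, ← hr b]
      exact h (by simpa [Fin.ext_iff] using hab)
    · rw [← hl i, ← hr j]
      exact h (by simp only [ne_eq, Fin.mk.injEq]; omega)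
  · rintro ⟨hY, hXY⟩ a b hab
    have hab' : (a : ℕ) ≠ b := Fin.val_ne_of_ne hab
    unfold combine
    split_ifs with ha hb hb
    · exact hX (by simpa using hab')
    · exact hXY _ _
    · rw [dist_comm]; exact hXY _ _
    · exact hY (by simp only [ne_eq, Fin.mk.injEq]; omega)

variable {f : R3 → R3 → ℝ}

theorem ZN_eq_nonoverlapProb (hf0 : ∀ x v, 0 ≤ f x v)
    (hfi : Integrable fun z : R3 × R3 => f z.1 z.2) (N : ℕ) (r : ℝ) :
    ZN f N r = nonoverlapProb (positionLaw f) N (2 * r) :=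
  integral_indicator_mul_prod hf0 hfi (measurableSet_nonoverlapSet _)

theorem margFam_FinitN_eq (hf0 : ∀ x v, 0 ≤ f x v)
    (hfi : Integrable fun z : R3 × R3 => f z.1 z.2) {N k : ℕ} (hk : k ≤ N) {r : ℝ}
    {X : Fin k → R3} (hX : X ∈ nonoverlapSet (Fin k) R3 (2 * r)) (V : Fin k → R3) :
    margFam N (FinitN f N r) k X V = (∏ i, f (X i) (V i)) *
      ((Measure.pi fun _ => positionLaw f).real
          (nonoverlapAvoidingSet (Fin (N - k)) X (2 * r)) /
        nonoverlapProb (positionLaw f) N (2 * r)) := by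
  rw [margFam, dif_pos hk, marginal, div_eq_inv_mul,
    ← integral_indicator_mul_prod hf0 hfi (measurableSet_nonoverlapAvoidingSet X (2 * r)),
    ← integral_const_mul, ← integral_const_mul]
  refine integral_congr_ae (.of_forall fun W => ?_)
  have hind : (OmegaSet N r).indicator (fun _ => (1 : ℝ)) (combine hk X W.1) =
      (nonoverlapAvoidingSet (Fin (N - k)) X (2 * r)).indicator (fun _ => (1 : ℝ)) W.1 :=
    indicator_eq_indicator (combine_mem_nonoverlapSet_iff hk hX) rfl
  simp only [FinitN, ZN_eq_nonoverlapProb hf0 hfi, prod_combine, hind]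
  ring

theorem abs_margFam_FinitN_sub_prod_le (hf0 : ∀ x v, 0 ≤ f x v)
    (hf1 : ∫ z : R3 × R3, f z.1 z.2 = 1) {N k : ℕ} (hk : k ≤ N) {r ε : ℝ} {δ : ℝ≥0}
    (hδ : ∀ x, positionLaw f (Metric.closedBall x (2 * r)) ≤ δ) (hε : N * δ ≤ ε) (hε1 : ε < 1)
    {X : Fin k → R3} (hX : X ∈ nonoverlapSet (Fin k) R3 (2 * r)) (V : Fin k → R3) :
    |margFam N (FinitN f N r) k X V - ∏ i, f (X i) (V i)| ≤
      (∏ i, f (X i) (V i)) * (k * ε / (1 - ε) ^ (k + 1)) := by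
  have := isProbabilityMeasure_positionLaw hf0 hf1
  have hN : N - k + k = N := Nat.sub_add_cancel hk
  have hratio := abs_measureReal_avoiding_div_sub_one_le hδ (n := N - k) (by rwa [hN]) hε1 X
  have hprod : 0 ≤ ∏ i, f (X i) (V i) := Finset.prod_nonneg fun _ _ => hf0 _ _
  rw [hN] at hratio
  rw [margFam_FinitN_eq hf0 (integrable_of_integral_eq_one hf1) hk hX, ← mul_sub_one, abs_mul,
    abs_of_nonneg hprod]
  gcongr

theorem positionLaw_closedBall_le (hf : Measurable (Function.uncurry f)) {ρ : ℝ≥0}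
    (hρ : ∀ x, ∫⁻ v, ENNReal.ofReal (f x v) ≤ ρ) (x : R3) (s : ℝ) :
    positionLaw f (Metric.closedBall x s) ≤
      (ρ * (π * 4 / 3).toNNReal * s.toNNReal ^ 3 : ℝ≥0) :=
  calc positionLaw f (Metric.closedBall x s) ≤ ρ * volume (Metric.closedBall x s) :=
        positionLaw_le_mul_volume hf hρ Metric.isClosed_closedBall.measurableSet
    _ = _ := by
        rw [EuclideanSpace.volume_closedBall_fin_three, ENNReal.coe_mul, ENNReal.coe_mul,
          ENNReal.coe_pow, mul_comm (ENNReal.ofReal s ^ 3), mul_assoc]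
        rfl

end Marginals

section Limits

theorem tendsto_zero_of_tendsto_natCast_mul_pow {p : ℕ} {r : ℕ → ℝ}
    (hr : ∀ N, 0 ≤ r N) (h : Tendsto (fun N => N * r N ^ p) atTop (𝓝 0)) :
    Tendsto r atTop (𝓝 0) := by
  refine tendsto_order.2 ⟨fun a ha => .of_forall fun N => ha.trans_le (hr N), fun a ha => ?_⟩
  filter_upwards [h.eventually_lt_const (pow_pos ha p), eventually_ge_atTop 1] with N hN hN1
  refine lt_of_pow_lt_pow_left₀ p ha.le (hN.trans_le' ?_)
  exact le_mul_of_one_le_left (pow_nonneg (hr N) p) (by exact_mod_cast hN1)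

theorem tendsto_natCast_mul_rBG_pow_three {γ : ℝ} (hγ : 0 ≤ γ) :
    Tendsto (fun N : ℕ => N * rBG γ N ^ 3) atTop (𝓝 0) := by
  have hr : Tendsto (fun N => rBG γ N) atTop (𝓝 0) := by
    simpa only [rBG, sqrt_zero, mul_zero] using
      (tendsto_const_div_atTop_nhds_zero_nat γ).sqrt.const_mul (1 / 2)
  have hN : ∀ᶠ N : ℕ in atTop, γ / 4 * rBG γ N = N * rBG γ N ^ 3 := by
    filter_upwards [eventually_ne_atTop 0] with N hN
    have hsq : N * rBG γ N ^ 2 = γ / 4 := by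
      rw [rBG, mul_pow, sq_sqrt (by positivity)]
      field_simp
      norm_num [mul_comm]
    rw [← hsq]
    ring
  simpa using (hr.const_mul (γ / 4)).congr' hN

theorem tendsto_mul_div_one_sub_pow {α : Type*} {l : Filter α} {ε : α → ℝ}
    (hε : Tendsto ε l (𝓝 0)) (c : ℝ) (m : ℕ) :
    Tendsto (fun a => c * ε a / (1 - ε a) ^ m) l (𝓝 0) := by
  simpa [Pi.div_def] using (hε.const_mul c).div ((hε.const_sub 1).pow m) (by simp)

theorem tendstoUniformlyOn_of_eventually_abs_sub_le {α β : Type*} {l : Filter α} {K : Set β}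
    {F : α → β → ℝ} {g : β → ℝ} {b : α → ℝ} (hb : Tendsto b l (𝓝 0))
    (h : ∀ᶠ a in l, ∀ z ∈ K, |F a z - g z| ≤ b a) : TendstoUniformlyOn F g l K := by
  refine Metric.tendstoUniformlyOn_iff.2 fun η hη => ?_
  filter_upwards [h, hb.eventually_lt_const hη] with a ha hba z hz
  rw [dist_comm, Real.dist_eq]
  exact (ha z hz).trans_lt hba

theorem lintegral_ofReal_le_toNNReal_integral {α : Type*} [MeasurableSpace α] {μ : Measure α}
    {g h : α → ℝ} (hh : Integrable h μ) (hh0 : 0 ≤ h) (hgh : g ≤ h) :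
    ∫⁻ a, ENNReal.ofReal (g a) ∂μ ≤ (∫ a, h a ∂μ).toNNReal :=
  (lintegral_mono fun a => ENNReal.ofReal_le_ofReal (hgh a)).trans
    (ofReal_integral_eq_lintegral_ofReal hh (.of_forall hh0)).ge

theorem integrable_exp_neg_mul_sq_norm {V : Type*} [NormedAddCommGroup V] [InnerProductSpace ℝ V]
    [FiniteDimensional ℝ V] [MeasurableSpace V] [BorelSpace V] {b : ℝ} (hb : 0 < b) :
    Integrable fun v : V => exp (-b * ‖v‖ ^ 2) := by
  refine .of_integral_ne_zero ?_
  rw [GaussianFourier.integral_rexp_neg_mul_sq_norm hb]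
  positivity

end Limits

theorem marginals_converge_boltzmann_grad_general {f : R3 → R3 → ℝ}
    (hf : Measurable (Function.uncurry f)) (hf0 : ∀ x v, 0 ≤ f x v)
    (hf1 : ∫ z : R3 × R3, f z.1 z.2 = 1) {M : ℝ} (hM : ∀ x v, f x v ≤ M) {ρ : ℝ≥0}
    (hρ : ∀ x, ∫⁻ v, ENNReal.ofReal (f x v) ≤ ρ) {r : ℕ → ℝ} (hr0 : ∀ N, 0 ≤ r N)
    (hr : Tendsto (fun N => N * r N ^ 3) atTop (𝓝 0)) {k : ℕ}
    {K : Set ((Fin k → R3) × (Fin k → R3))} (hK : IsCompact K)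
    (hinj : ∀ Z ∈ K, Function.Injective Z.1) :
    TendstoUniformlyOn (fun N Z => margFam N (FinitN f N (r N)) k Z.1 Z.2)
      (fun Z => ∏ i, f (Z.1 i) (Z.2 i)) atTop K := by
  set δ : ℕ → ℝ≥0 := fun N => ρ * (π * 4 / 3).toNNReal * (2 * r N).toNNReal ^ 3
  have hε : Tendsto (fun N => N * (δ N : ℝ)) atTop (𝓝 0) := by
    have hδ (N : ℕ) : N * (δ N : ℝ) = 8 * ρ * (π * 4 / 3).toNNReal * (N * r N ^ 3) := by
      simp only [δ, NNReal.coe_mul, NNReal.coe_pow,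
        Real.coe_toNNReal _ (mul_nonneg zero_le_two (hr0 N))]
      ring
    simpa only [hδ, mul_zero] using hr.const_mul _
  have hs : Tendsto (fun N => 2 * r N) atTop (𝓝 0) := by
    simpa using (tendsto_zero_of_tendsto_natCast_mul_pow hr0 hr).const_mul 2
  have hsep : ∀ᶠ N in atTop, Prod.fst '' K ⊆ nonoverlapSet (Fin k) R3 (2 * r N) :=
    hs.eventually <| eventually_subset_nonoverlapSet (hK.image continuous_fst)
      (forall_mem_image.2 hinj)
  have herr := (tendsto_mul_div_one_sub_pow hε k (k + 1)).const_mul (M ^ k)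
  rw [mul_zero] at herr
  refine tendstoUniformlyOn_of_eventually_abs_sub_le herr ?_
  filter_upwards [hsep, hε.eventually_lt_const one_pos, eventually_ge_atTop k]
    with N hN hε1 hkN Z hZ
  refine (abs_margFam_FinitN_sub_prod_le hf0 hf1 hkN (positionLaw_closedBall_le hf hρ · _) le_rfl
    hε1 (hN (mem_image_of_mem _ hZ)) Z.2).trans ?_
  have : 0 ≤ 1 - N * (δ N : ℝ) := by linarith
  gcongr
  calc ∏ i, f (Z.1 i) (Z.2 i) ≤ ∏ _i : Fin k, M :=
        Finset.prod_le_prod (fun _ _ => hf0 _ _) fun _ _ => hM _ _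
    _ = M ^ k := by simp

/-- Convergence of the marginals of admissible initial data in the Boltzmann–Grad scaling
`N(2r)² = γ`: for fixed `k`, `F^in_{N:k} → (f^in)^{⊗k}` uniformly on compact subsets of
`Ω⁰_k × (ℝ³)^k`. -/
theorem marginals_converge_boltzmann_grad (β₀ μ₀ γ : ℝ) (hβ₀ : 0 < β₀) (hγ : 0 < γ)
    (f : R3 → R3 → ℝ) (hf_cont : Continuous (Function.uncurry f))
    (hf_bound : ∀ x v : R3, 0 ≤ f x v ∧ f x v ≤ exp (-μ₀ - β₀ * ‖v‖ ^ 2 / 2))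
    (hf_norm : (∫ z : R3 × R3, f z.1 z.2) = 1) :
    ∀ k : ℕ, 1 ≤ k →
      ∀ K : Set ((Fin k → R3) × (Fin k → R3)), IsCompact K →
        K ⊆ {Z | ∀ i j : Fin k, i ≠ j → Z.1 i ≠ Z.1 j} →
        TendstoUniformlyOn
          (fun (N : ℕ) (Z : (Fin k → R3) × (Fin k → R3)) =>
            margFam N (FinitN f N (rBG γ N)) k Z.1 Z.2)
          (fun Z => ∏ i, f (Z.1 i) (Z.2 i)) Filter.atTop K := by
  intro k _ K hK hsub
  have hgauss : Integrable fun v : R3 => exp (-μ₀ - β₀ * ‖v‖ ^ 2 / 2) := by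
    refine ((integrable_exp_neg_mul_sq_norm (half_pos hβ₀)).const_mul (exp (-μ₀))).congr
      (.of_forall fun v => ?_)
    dsimp only
    rw [← exp_add]
    ring_nf
  have hbdd (v : R3) : exp (-μ₀ - β₀ * ‖v‖ ^ 2 / 2) ≤ exp (-μ₀) :=
    exp_le_exp.2 (sub_le_self _ (by positivity))
  exact marginals_converge_boltzmann_grad_general hf_cont.measurable (fun x v => (hf_bound x v).1)
    hf_norm (fun x v => (hf_bound x v).2.trans (hbdd v))
    (fun x => lintegral_ofReal_le_toNNReal_integral hgauss (fun _ => (exp_pos _).le)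
      fun v => (hf_bound x v).2)
    (fun N => by unfold rBG; positivity) (tendsto_natCast_mul_rBG_pow_three hγ.le) hK
    fun Z hZ i j => not_imp_not.1 (hsub hZ i j)
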